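/- Let A be a real m×n matrix, B a real m×r matrix, S a subset of column indices of A with A_{:S}ᵀA_{:S} invertible, and P a subset of S with R = S \ P and A_{:P}ᵀA_{:P} invertible. Let P^(S) and P^(P) be the projection matrices onto the spans of the columns of A indexed by S and P respectively, let E = A − P^(P)A and F = B − P^(P)B, assume E_{:R}ᵀE_{:R} is invertible, and let R^(R) = E_{:R}(E_{:R}ᵀE_{:R})⁻¹E_{:R}ᵀ. Then ‖B − P^(S)B‖_F² = ‖B − P^(P)B‖_F² − ‖R^(R)F‖_F². -/

import Mathlib

open Matrix

/-- The `m × |S|` submatrix of `A` consisting of the columns indexed by `S`. -/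
noncomputable def cols {m n : ℕ} (A : Matrix (Fin m) (Fin n) ℝ) (S : Finset (Fin n)) :
    Matrix (Fin m) {j // j ∈ S} ℝ :=
  Matrix.of fun i j => A i j.val

/-- The projection matrix `A_{:S} (A_{:S}ᵀ A_{:S})⁻¹ A_{:S}ᵀ` onto the span of the columns of `A`
indexed by `S`. -/
noncomputable def proj {m n : ℕ} (A : Matrix (Fin m) (Fin n) ℝ) (S : Finset (Fin n)) :
    Matrix (Fin m) (Fin m) ℝ :=
  cols A S * ((cols A S)ᵀ * cols A S)⁻¹ * (cols A S)ᵀ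

/-- The squared Frobenius norm `‖M‖_F² = tr(MᵀM)`. -/
noncomputable def frobSq {m r : ℕ} (M : Matrix (Fin m) (Fin r) ℝ) : ℝ :=
  Matrix.trace (Mᵀ * M)


lemma mul_cols {k m n : ℕ} (M : Matrix (Fin k) (Fin m) ℝ) (A : Matrix (Fin m) (Fin n) ℝ)
    (S : Finset (Fin n)) : M * cols A S = cols (M * A) S := by
  ext i j
  simp [cols, Matrix.mul_apply]

lemma cols_congr {m n : ℕ} (A B : Matrix (Fin m) (Fin n) ℝ)
    (S : Finset (Fin n)) : cols A S = cols B S ↔ ∀ j ∈ S, ∀ i, A i j = B i j := by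
  constructor
  · intro h j hj i
    exact congrFun (congrFun h i) ⟨j, hj⟩
  · intro h
    ext i j
    exact h j.1 j.2 i

lemma proj_symm {m n : ℕ} (A : Matrix (Fin m) (Fin n) ℝ) (S : Finset (Fin n)) :
    (proj A S)ᵀ = proj A S := by
  simp [proj, Matrix.transpose_mul, Matrix.transpose_nonsing_inv, Matrix.mul_assoc]

lemma proj_mul_cols {m n : ℕ} (A : Matrix (Fin m) (Fin n) ℝ) (S : Finset (Fin n))
    (h : IsUnit ((cols A S)ᵀ * cols A S)) : proj A S * cols A S = cols A S := by
  rw [proj, Matrix.mul_assoc, Matrix.mul_assoc,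
    Matrix.nonsing_inv_mul _ ((Matrix.isUnit_iff_isUnit_det _).1 h), Matrix.mul_one]

lemma mul_proj {m n : ℕ} (M : Matrix (Fin m) (Fin m) ℝ) (A : Matrix (Fin m) (Fin n) ℝ)
    (S : Finset (Fin n)) (h : M * cols A S = cols A S) : M * proj A S = proj A S := by
  rw [proj, ← Matrix.mul_assoc, ← Matrix.mul_assoc, h]

theorem stmt1 {m n r : ℕ} (A : Matrix (Fin m) (Fin n) ℝ) (B : Matrix (Fin m) (Fin r) ℝ)
    (S P : Finset (Fin n)) (hPS : P ⊆ S)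
    (hS : IsUnit ((cols A S)ᵀ * cols A S)) (hP : IsUnit ((cols A P)ᵀ * cols A P))
    (E : Matrix (Fin m) (Fin n) ℝ) (hE : E = A - proj A P * A)
    (F : Matrix (Fin m) (Fin r) ℝ) (hF : F = B - proj A P * B)
    (hR : IsUnit ((cols E (S \ P))ᵀ * cols E (S \ P))) :
    frobSq (B - proj A S * B) = frobSq (B - proj A P * B) - frobSq (proj E (S \ P) * F) := by
  have hWs := proj_symm A S
  have hQs := proj_symm A P
  have hTs := proj_symm E (S \ P)
  have hWc := proj_mul_cols A S hS
  have hQc := proj_mul_cols A P hP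
  have hTc := proj_mul_cols E (S \ P) hR
  have hWW := mul_proj _ A S hWc
  have hQQ := mul_proj _ A P hQc
  have hTT := mul_proj _ E (S \ P) hTc
  have hWQ : proj A S * proj A P = proj A P := by
    apply mul_proj
    rw [mul_cols, cols_congr] at hWc ⊢
    exact fun j hj => hWc j (hPS hj)
  have hQE : proj A P * E = 0 := by
    rw [hE, Matrix.mul_sub, ← Matrix.mul_assoc, hQQ, sub_self]
  have hQT : proj A P * proj E (S \ P) = 0 := by
    have : proj A P * cols E (S \ P) = 0 := by
      rw [mul_cols, hQE]; rfl
    rw [proj.eq_def E, ← Matrix.mul_assoc, ← Matrix.mul_assoc, this]; simp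
  have hTQ : proj E (S \ P) * proj A P = 0 := by
    have := congrArg Matrix.transpose hQT
    rwa [Matrix.transpose_mul, hQs, hTs, Matrix.transpose_zero] at this
  have hWT : proj A S * proj E (S \ P) = proj E (S \ P) := by
    apply mul_proj
    rw [mul_cols, cols_congr] at hWc ⊢
    intro j hj i
    have e : proj A S * E = proj A S * A - proj A P * A := by
      rw [hE, Matrix.mul_sub, ← Matrix.mul_assoc, hWQ]
    rw [e, hE, Matrix.sub_apply, Matrix.sub_apply, hWc j (Finset.mem_sdiff.1 hj).1]
  have hTE : proj E (S \ P) * E = proj E (S \ P) * A := by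
    have := congrArg (fun X => proj E (S \ P) * X) hE
    rw [this, Matrix.mul_sub, ← Matrix.mul_assoc (proj E (S \ P)) (proj A P) A, hTQ,
      Matrix.zero_mul, sub_zero]
  have hTA : ∀ j ∈ P, ∀ i, (proj E (S \ P) * A) i j = 0 := by
    have : proj E (S \ P) * cols A P = 0 := by
      rw [← hQc, ← Matrix.mul_assoc, hTQ, Matrix.zero_mul]
    rw [mul_cols] at this
    intro j hj i
    exact congrFun (congrFun this i) ⟨j, hj⟩
  have hQTW : (proj A P + proj E (S \ P)) * proj A S = proj A S := by
    apply mul_proj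
    rw [mul_cols, cols_congr] at hQc hTc ⊢
    intro j hj i
    rw [Matrix.add_mul, Matrix.add_apply]
    by_cases hjP : j ∈ P
    · rw [hQc j hjP, hTA j hjP, add_zero]
    · rw [← hTE, hTc j (Finset.mem_sdiff.2 ⟨hj, hjP⟩), congrFun (congrFun hE i) j,
        Matrix.sub_apply]
      ring
  have hW : proj A S = proj A P + proj E (S \ P) := by
    have := congrArg Matrix.transpose hQTW
    rw [Matrix.transpose_mul, Matrix.transpose_add, hQs, hTs, hWs, Matrix.mul_add, hWQ, hWT] at this
    exact this.symm
  have hTF : proj E (S \ P) * F = proj E (S \ P) * B := by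
    rw [hF, Matrix.mul_sub, ← Matrix.mul_assoc _ (proj A P), hTQ, Matrix.zero_mul, sub_zero]
  have key : ∀ M : Matrix (Fin m) (Fin m) ℝ, Mᵀ = M → M * M = M →
      frobSq (M * B) = Matrix.trace (Bᵀ * (M * B)) := by
    intro M h1 h2
    rw [frobSq, Matrix.transpose_mul, h1, Matrix.mul_assoc, ← Matrix.mul_assoc M M, h2]
  have key2 : ∀ M : Matrix (Fin m) (Fin m) ℝ, Mᵀ = M → M * M = M →
      frobSq (B - M * B) = Matrix.trace (Bᵀ * B) - Matrix.trace (Bᵀ * (M * B)) := by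
    intro M h1 h2
    have : B - M * B = (1 - M) * B := by rw [Matrix.sub_mul, Matrix.one_mul]
    rw [this, key]
    · rw [← this, Matrix.mul_sub, Matrix.trace_sub]
    · simp [h1]
    · simp [Matrix.sub_mul, Matrix.mul_sub, h2]
  rw [hTF, key2 _ hWs hWW, key2 _ hQs hQQ, key _ hTs hTT, hW, Matrix.add_mul, Matrix.mul_add,
    Matrix.trace_add]
  ring
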